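/- For every t in the open interval (0,2), ∫_0^2 log|t-s| / √(2s - s²) ds = -π log 2. -/

import Mathlib

open Real intervalIntegral

/-!
Substituting `s = 1 + cos θ` turns `π⁻¹ ds / √(2s - s²)` into the uniform measure on the unit
circle, seen through `u ↦ re u`. On that circle `re u` is the Joukowski transform
`J u = (u + u⁻¹) / 2`, and `2 u (J u - J w) = (u - w) (u - w⁻¹)`, so by Jensen's formula the mean of
`log ‖J u - J w‖` over `u` is `log⁺ ‖w‖ + log⁺ ‖w⁻¹‖ - log 2 = |log ‖w‖| - log 2`. The points of
`[-1, 1]` are exactly the values `J w` with `‖w‖ = 1`, where this mean is `-log 2`.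
-/

section ArcsineMeasure

open MeasureTheory Polynomial.Chebyshev

theorem integral_zero_two_mul_of_symm {E : Type*} [NormedAddCommGroup E] [NormedSpace ℝ E]
    {f : ℝ → E} {c : ℝ} (hf : IntervalIntegrable f volume 0 (2 * c))
    (hsymm : ∀ x, f (2 * c - x) = f x) :
    ∫ x in 0..2 * c, f x = (2 : ℝ) • ∫ x in 0..c, f x := by
  have hc : c ∈ Set.uIcc 0 (2 * c) := by
    rcases le_total 0 c with h | h
    · exact Set.mem_uIcc_of_le h (by linarith)
    · exact Set.mem_uIcc_of_ge (by linarith) h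
  have hreflect : ∫ x in c..2 * c, f x = ∫ x in 0..c, f x := by
    have h := integral_comp_sub_left (a := 0) (b := c) f (2 * c)
    simp only [hsymm, sub_zero] at h
    rw [h, two_mul, add_sub_cancel_right]
  rw [← integral_add_adjacent_intervals (hf.mono_set (Set.uIcc_subset_uIcc_left hc))
    (hf.mono_set (Set.uIcc_subset_uIcc_right hc)), hreflect, two_smul]

theorem integral_measureT_eq_circleAverage {f : ℝ → ℝ}
    (hf : CircleIntegrable (fun u ↦ f u.re) 0 1) :
    ∫ x, f x ∂measureT = π * circleAverage (fun u ↦ f u.re) 0 1 := by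
  simp only [CircleIntegrable, circleMap_zero_re, one_mul] at hf
  simp only [integral_measureT_eq_integral_cos, circleAverage_def, circleMap_zero_re, one_mul]
  rw [integral_zero_two_mul_of_symm hf fun θ ↦ by rw [cos_two_pi_sub]]
  simp only [smul_eq_mul]
  field_simp

theorem integral_div_sqrt_two_mul_sub_sq (f : ℝ → ℝ) :
    ∫ s in 0..2, f s / √(2 * s - s ^ 2) = ∫ x, f (x + 1) ∂measureT := by
  have hweight (x : ℝ) : 2 * (x + 1) - (x + 1) ^ 2 = 1 - x ^ 2 := by ring
  calc ∫ s in 0..2, f s / √(2 * s - s ^ 2)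
      = ∫ s in (-1 + 1)..(1 + 1), f s / √(2 * s - s ^ 2) := by norm_num only
    _ = ∫ x in -1..1, f (x + 1) / √(1 - x ^ 2) := by
        simp only [← integral_comp_add_right, hweight]
    _ = ∫ x, f (x + 1) ∂measureT := by
        simp only [integral_measureT, sqrt_inv, div_eq_mul_inv]

end ArcsineMeasure

/-- The Joukowski transform `J`, which maps `ℂ \ {0}` onto `ℂ`, identifies `w` with `w⁻¹`, and sends
the unit circle onto the segment `[-1, 1]`. At `w = 0` it takes the junk value `0`. -/
noncomputable def joukowski (w : ℂ) : ℂ := (w + w⁻¹) / 2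

namespace joukowski

open Filter Metric

theorem eq_re_of_norm_eq_one {u : ℂ} (hu : ‖u‖ = 1) : joukowski u = u.re := by
  rw [joukowski, Complex.inv_eq_conj hu, Complex.re_eq_add_conj]

theorem exists_norm_eq_one_and_eq {x : ℝ} (hx : x ∈ Set.Icc (-1) 1) :
    ∃ w : ℂ, ‖w‖ = 1 ∧ joukowski w = x := by
  have hnorm := Complex.norm_exp_ofReal_mul_I (arccos x)
  refine ⟨_, hnorm, ?_⟩
  rw [eq_re_of_norm_eq_one hnorm, Complex.exp_ofReal_mul_I_re, cos_arccos hx.1 hx.2]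

theorem two_mul_mul_sub {u w : ℂ} (hu : u ≠ 0) (hw : w ≠ 0) :
    2 * u * (joukowski u - joukowski w) = (u - w) * (u - w⁻¹) := by
  unfold joukowski
  field_simp
  ring

theorem log_norm_sub_re {u w : ℂ} (hu : ‖u‖ = 1) (hw : w ≠ 0) (huw : u ≠ w) (huw' : u ≠ w⁻¹) :
    log ‖joukowski w - u.re‖ = log ‖u - w‖ + log ‖u - w⁻¹‖ - log 2 := by
  have hu0 : u ≠ 0 := norm_ne_zero_iff.1 (by simp [hu])
  have hfactor : 2 * ‖joukowski w - u.re‖ = ‖u - w‖ * ‖u - w⁻¹‖ := by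
    simpa [hu, eq_re_of_norm_eq_one hu, norm_sub_rev] using congrArg norm (two_mul_mul_sub hu0 hw)
  have h := norm_ne_zero_iff.2 (sub_ne_zero.2 huw)
  have h' := norm_ne_zero_iff.2 (sub_ne_zero.2 huw')
  have hJ : ‖joukowski w - u.re‖ ≠ 0 := right_ne_zero_of_mul (hfactor ▸ mul_ne_zero h h')
  rw [← log_mul h h', ← hfactor, log_mul two_ne_zero hJ, add_sub_cancel_left]

theorem log_norm_sub_re_eventuallyEq {w : ℂ} (hw : w ≠ 0) :
    (fun u : ℂ ↦ log ‖joukowski w - u.re‖) =ᶠ[codiscreteWithin (sphere 0 1)]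
      fun u ↦ log ‖u - w‖ + log ‖u - w⁻¹‖ - log 2 := by
  filter_upwards [self_mem_codiscreteWithin _, compl_singleton_mem_codiscreteWithin w,
    compl_singleton_mem_codiscreteWithin w⁻¹] with u hu huw huw'
  exact log_norm_sub_re (mem_sphere_zero_iff_norm.1 hu) hw huw huw'

theorem circleIntegrable_log_norm_sub_re {w : ℂ} (hw : w ≠ 0) :
    CircleIntegrable (fun u ↦ log ‖joukowski w - u.re‖) 0 1 := by
  refine .congr_codiscreteWithin (by simpa using (log_norm_sub_re_eventuallyEq hw).symm) ?_
  fun_prop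

theorem circleAverage_log_norm_sub_re {w : ℂ} (hw : w ≠ 0) :
    circleAverage (fun u ↦ log ‖joukowski w - u.re‖) 0 1 = |log ‖w‖| - log 2 := by
  have hposLog : log⁺ ‖w‖ + log⁺ ‖w‖⁻¹ = |log ‖w‖| := by
    rw [← half_mul_log_add_log_abs, ← half_mul_log_add_log_abs, log_inv, abs_neg]
    ring
  calc circleAverage (fun u ↦ log ‖joukowski w - u.re‖) 0 1
      = circleAverage (fun u ↦ log ‖u - w‖ + log ‖u - w⁻¹‖ - log 2) 0 1 :=
        circleAverage_congr_codiscreteWithin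
          (by simpa using log_norm_sub_re_eventuallyEq hw) one_ne_zero
    _ = log⁺ ‖w‖ + log⁺ ‖w⁻¹‖ - log 2 := by
        rw [circleAverage_fun_sub (by fun_prop) (by fun_prop),
          circleAverage_fun_add (by fun_prop) (by fun_prop), circleAverage_const]
        simp only [circleAverage_log_norm_sub_const_eq_posLog]
    _ = |log ‖w‖| - log 2 := by rw [norm_inv, hposLog]

end joukowski

theorem integral_log_abs_arcsine_kernel_general {w : ℂ} (hw : w ≠ 0) :
    ∫ s in (0 : ℝ)..2, log ‖1 + joukowski w - s‖ / √(2 * s - s ^ 2) = π * (|log ‖w‖| - log 2) := by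
  rw [integral_div_sqrt_two_mul_sub_sq, ← joukowski.circleAverage_log_norm_sub_re hw,
    ← integral_measureT_eq_circleAverage (f := fun x ↦ log ‖joukowski w - x‖)
      (joukowski.circleIntegrable_log_norm_sub_re hw)]
  simp only [Complex.ofReal_add, Complex.ofReal_one, add_comm (1 : ℂ), add_sub_add_right_eq_sub]

theorem integral_log_abs_arcsine_kernel (t : ℝ) (ht : t ∈ Set.Ioo (0 : ℝ) 2) :
    ∫ s in (0 : ℝ)..2, Real.log |t - s| / Real.sqrt (2 * s - s ^ 2) =
      -Real.pi * Real.log 2 := by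
  obtain ⟨w, hnorm, hw⟩ := joukowski.exists_norm_eq_one_and_eq (x := t - 1)
    ⟨by linarith [ht.1], by linarith [ht.2]⟩
  have hw0 : w ≠ 0 := norm_ne_zero_iff.1 (by simp [hnorm])
  have hdist (s : ℝ) : ‖1 + joukowski w - s‖ = |t - s| := by
    rw [hw, ← norm_eq_abs, ← Complex.norm_real]
    congr 1
    push_cast
    ring
  simpa only [hdist, hnorm, log_one, abs_zero, zero_sub, mul_neg, neg_mul] using
    integral_log_abs_arcsine_kernel_general hw0
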